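/- Let Γ^a_{bc} be a torsion-free affine connection on an open set U ⊆ ℝ², and let ε_{ab} be a nowhere-vanishing skew-symmetric 2-form on U that is parallel: ∇_a ε_{bc} = ∂_a ε_{bc} − Γ^d_{ab} ε_{dc} − Γ^d_{ac} ε_{bd} = 0 (Γ is a special connection). For a symmetric C¹ tensor field σ^{ab} define the lowered tensor σ_{ab} = ε_{ca} ε_{db} σ^{cd}. Then there exists a vector field μ with ∇_a σ^{bc} = δ^b_a μ^c + δ^c_a μ^b on U if and only if σ_{ab} satisfies the Killing-tensor equation ∇_{(a}σ_{bc)} = 0 on U. (In two dimensions the metrisability equations are equivalent to a Killing equation.) -/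

import Mathlib

/-- Partial derivative `∂_i f` on `ℝ²` (points as `Fin 2 → ℝ`). -/
noncomputable def pdv (i : Fin 2) (f : (Fin 2 → ℝ) → ℝ) (x : Fin 2 → ℝ) : ℝ :=
  fderiv ℝ f x (Pi.single i 1)

/-- Covariant derivative `∇_a σ^{bc}` of a `(2,0)`-tensor. -/
noncomputable def covUp (Γ : Fin 2 → Fin 2 → Fin 2 → (Fin 2 → ℝ) → ℝ)
    (σ : Fin 2 → Fin 2 → (Fin 2 → ℝ) → ℝ) (a b c : Fin 2) (x : Fin 2 → ℝ) : ℝ :=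
  pdv a (σ b c) x + ∑ d, Γ b a d x * σ d c x + ∑ d, Γ c a d x * σ b d x

/-- Covariant derivative `∇_a σ_{bc}` of a `(0,2)`-tensor. -/
noncomputable def covLow (Γ : Fin 2 → Fin 2 → Fin 2 → (Fin 2 → ℝ) → ℝ)
    (σ : Fin 2 → Fin 2 → (Fin 2 → ℝ) → ℝ) (a b c : Fin 2) (x : Fin 2 → ℝ) : ℝ :=
  pdv a (σ b c) x - ∑ d, Γ d a b x * σ d c x - ∑ d, Γ d a c x * σ b d x

/-!
Lowering indices with a parallel `ε` commutes with `∇`, so both sides of the equivalence are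
pointwise conditions on `T_a^{bc} = ∇_a σ^{bc}`. In dimension two, antisymmetrising
`S_{abc} = ε_{db} ε_{ec} T_a^{de}` in `a, b` leaves only the trace `τ^c = T_d^{dc}`. Hence
`3 S_{abc}` is the cyclic sum of `S` plus the lowering of `δ^b_a τ^c + δ^c_a τ^b`, and the cyclic
sum vanishes exactly when `T` is of the form `δ^b_a μ^c + δ^c_a μ^b`, with `μ = τ / 3`.
-/

section Algebra

open Matrix

variable {ι R : Type*}

/-- The sum of a 3-index array over all orderings of its indices: `3!` times the symmetrisation
`S_{(abc)}`, so that no division occurs. -/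
def symmetrizedSum [Add R] (S : ι → ι → ι → R) (a b c : ι) : R :=
  S a b c + S b c a + S c a b + S a c b + S b a c + S c b a

/-- The tensor `δ^b_a v^c + δ^c_a v^b` with one lower and two upper indices, as a matrix in `b, c`
for each `a`: the right-hand side of the metrisability equation. -/
def deltaTensor [DecidableEq ι] [AddZeroClass R] (v : ι → R) (a : ι) : Matrix ι ι R :=
  of fun b c => (if b = a then v c else 0) + (if c = a then v b else 0)

variable [CommRing R]

theorem transpose_mul_mul_apply [Fintype ι] (e t : Matrix ι ι R) (b c : ι) :
    (eᵀ * t * e) b c = ∑ d, ∑ f, e d b * e f c * t d f := by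
  simp only [mul_apply, transpose_apply, Finset.sum_mul]
  rw [Finset.sum_comm]
  exact Finset.sum_congr rfl fun d _ => Finset.sum_congr rfl fun f _ => by ring

theorem transpose_mul_deltaTensor_mul_apply [Fintype ι] [DecidableEq ι] (e : Matrix ι ι R)
    (v : ι → R) (a b c : ι) :
    (eᵀ * deltaTensor v a * e) b c = e a b * (v ᵥ* e) c + e a c * (v ᵥ* e) b := by
  simp only [transpose_mul_mul_apply, deltaTensor, of_apply, mul_add, mul_ite, mul_zero,
    Finset.sum_add_distrib, Finset.sum_ite_irrel, Finset.sum_const_zero, Finset.sum_ite_eq',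
    Finset.mem_univ, if_true, vecMul, dotProduct, Finset.mul_sum]
  congr 1 <;> exact Finset.sum_congr rfl fun d _ => by ring

theorem symmetrizedSum_transpose_mul_deltaTensor_mul [Fintype ι] [DecidableEq ι]
    {e : Matrix ι ι R} (hskew : ∀ i j, e i j = -e j i) (v : ι → R) (a b c : ι) :
    symmetrizedSum (fun a b c => (eᵀ * deltaTensor v a * e) b c) a b c = 0 := by
  simp only [symmetrizedSum, transpose_mul_deltaTensor_mul_apply, hskew b a, hskew c a, hskew c b]
  ring

theorem transpose_mul_mul_apply_sub_swap {e : Matrix (Fin 2) (Fin 2) R}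
    (hdiag : ∀ i, e i i = 0) (hskew : ∀ i j, e i j = -e j i)
    (T : Fin 2 → Matrix (Fin 2) (Fin 2) R) (a b c : Fin 2) :
    (eᵀ * T a * e) b c - (eᵀ * T b * e) a c = e a b * ((fun f => ∑ d, T d d f) ᵥ* e) c := by
  fin_cases a <;> fin_cases b <;>
    simp only [Fin.zero_eta, Fin.mk_one, transpose_mul_mul_apply, vecMul, dotProduct,
      Fin.sum_univ_two, hdiag, hskew 1 0] <;>
    ring

theorem six_mul_transpose_mul_mul_apply {e : Matrix (Fin 2) (Fin 2) R}
    (hdiag : ∀ i, e i i = 0) (hskew : ∀ i j, e i j = -e j i)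
    {T : Fin 2 → Matrix (Fin 2) (Fin 2) R} (hT : ∀ a, (T a).IsSymm) (a b c : Fin 2) :
    6 * (eᵀ * T a * e) b c =
      symmetrizedSum (fun a b c => (eᵀ * T a * e) b c) a b c +
        2 * (eᵀ * deltaTensor (fun f => ∑ d, T d d f) a * e) b c := by
  have lowered_symm (a b c : Fin 2) : (eᵀ * T a * e) b c = (eᵀ * T a * e) c b := by
    have : (eᵀ * T a * e).IsSymm := by simp [IsSymm, (hT a).eq, mul_assoc]
    exact this.apply c b
  have swap_ab := transpose_mul_mul_apply_sub_swap hdiag hskew T a b c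
  have swap_ac := transpose_mul_mul_apply_sub_swap hdiag hskew T a c b
  simp only [transpose_mul_deltaTensor_mul_apply, symmetrizedSum]
  linear_combination 2 * swap_ab + 2 * swap_ac + 3 * lowered_symm a b c - lowered_symm b c a +
    lowered_symm c a b

theorem exists_eq_deltaTensor_iff_symmetrizedSum_eq_zero {K : Type*} [Field K]
    (two_ne : (2 : K) ≠ 0) (three_ne : (3 : K) ≠ 0) {e : Matrix (Fin 2) (Fin 2) K}
    (hskew : ∀ i j, e i j = -e j i) (he : IsUnit e)
    {T : Fin 2 → Matrix (Fin 2) (Fin 2) K} (hT : ∀ a, (T a).IsSymm) :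
    (∃ v, ∀ a, T a = deltaTensor v a) ↔
      ∀ a b c, symmetrizedSum (fun a b c => (eᵀ * T a * e) b c) a b c = 0 := by
  constructor
  · rintro ⟨v, hv⟩ a b c
    simpa only [hv] using symmetrizedSum_transpose_mul_deltaTensor_mul hskew v a b c
  · intro hsum
    have hdiag (i : Fin 2) : e i i = 0 :=
      (mul_eq_zero.mp (by linear_combination hskew i i : 2 * e i i = 0)).resolve_left two_ne
    refine ⟨(3 : K)⁻¹ • fun f => ∑ d, T d d f, fun a => ?_⟩
    suffices eᵀ * T a * e = eᵀ * deltaTensor ((3 : K)⁻¹ • fun f => ∑ d, T d d f) a * e from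
      ((isUnit_transpose e).mpr he).mul_left_cancel (he.mul_right_cancel this)
    ext b c
    have decomposition := six_mul_transpose_mul_mul_apply hdiag hskew hT a b c
    rw [hsum, zero_add, transpose_mul_deltaTensor_mul_apply] at decomposition
    rw [transpose_mul_deltaTensor_mul_apply, smul_vecMul]
    simp only [Pi.smul_apply, smul_eq_mul]
    field_simp
    refine mul_left_cancel₀ two_ne ?_
    linear_combination decomposition

end Algebra

section PartialDerivative

variable {x : Fin 2 → ℝ} (i : Fin 2)

theorem pdv_mul {f g : (Fin 2 → ℝ) → ℝ} (hf : DifferentiableAt ℝ f x)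
    (hg : DifferentiableAt ℝ g x) :
    pdv i (fun y => f y * g y) x = pdv i f x * g x + f x * pdv i g x := by
  simp only [pdv, fderiv_fun_mul hf hg, add_apply,
    smul_apply, smul_eq_mul]
  ring

theorem pdv_sum {κ : Type*} {s : Finset κ} {f : κ → (Fin 2 → ℝ) → ℝ}
    (hf : ∀ k ∈ s, DifferentiableAt ℝ (f k) x) :
    pdv i (fun y => ∑ k ∈ s, f k y) x = ∑ k ∈ s, pdv i (f k) x := by
  simp only [pdv, fderiv_fun_sum hf, sum_apply]

end PartialDerivative

section CovariantDerivative

open Matrix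

variable {Γ : Fin 2 → Fin 2 → Fin 2 → (Fin 2 → ℝ) → ℝ}
  {g σ : Fin 2 → Fin 2 → (Fin 2 → ℝ) → ℝ} {x : Fin 2 → ℝ}

/-- The tensor field `g_{ca} g_{db} σ^{cd}`, i.e. `σ` with both indices lowered by `g`. The
contraction is over the first index of `g`, which fixes the convention when `g` is not symmetric. -/
def loweredField (g σ : Fin 2 → Fin 2 → (Fin 2 → ℝ) → ℝ) (a b : Fin 2) (y : Fin 2 → ℝ) : ℝ :=
  ∑ c, ∑ d, g c a y * g d b y * σ c d y

theorem pdv_loweredField (hg : ∀ a b, DifferentiableAt ℝ (g a b) x)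
    (hσ : ∀ a b, DifferentiableAt ℝ (σ a b) x) (a b c : Fin 2) :
    pdv a (loweredField g σ b c) x = ∑ d, ∑ f,
      ((pdv a (g d b) x * g f c x + g d b x * pdv a (g f c) x) * σ d f x +
        g d b x * g f c x * pdv a (σ d f) x) := by
  have hgg (d f : Fin 2) : DifferentiableAt ℝ (fun y => g d b y * g f c y) x :=
    (hg d b).fun_mul (hg f c)
  have hterm (d f : Fin 2) : DifferentiableAt ℝ (fun y => g d b y * g f c y * σ d f y) x :=
    (hgg d f).fun_mul (hσ d f)
  unfold loweredField
  rw [pdv_sum a fun d _ => DifferentiableAt.fun_sum fun f _ => hterm d f]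
  refine Finset.sum_congr rfl fun d _ => ?_
  rw [pdv_sum a fun f _ => hterm d f]
  refine Finset.sum_congr rfl fun f _ => ?_
  rw [pdv_mul a (hgg d f) (hσ d f), pdv_mul a (hg d b) (hg f c)]

theorem covLow_loweredField (hg : ∀ a b, DifferentiableAt ℝ (g a b) x)
    (hσ : ∀ a b, DifferentiableAt ℝ (σ a b) x) (hpar : ∀ a b c, covLow Γ g a b c x = 0)
    (a b c : Fin 2) :
    covLow Γ (loweredField g σ) a b c x =
      ∑ d, ∑ f, g d b x * g f c x * covUp Γ σ a d f x := by
  have pdv_g (a b c : Fin 2) :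
      pdv a (g b c) x = ∑ d, Γ d a b x * g d c x + ∑ d, Γ d a c x * g b d x := by
    have := hpar a b c
    rw [covLow] at this
    linear_combination this
  rw [covLow, pdv_loweredField hg hσ]
  simp only [pdv_g, covUp, loweredField, Fin.sum_univ_two]
  ring

theorem covUp_comm (hσ : ∀ a b y, σ a b y = σ b a y) (a b c : Fin 2) :
    covUp Γ σ a b c x = covUp Γ σ a c b x := by
  have hσ' (a b : Fin 2) : σ a b = σ b a := funext (hσ a b)
  simp only [covUp, hσ' c b, hσ' _ b, hσ' c]
  ring

theorem exists_covUp_eq_iff_symmetrizedSum_covLow_eq_zero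
    (hskew : ∀ a b, g a b x = -g b a x) (hg0 : g 0 1 x ≠ 0)
    (hg : ∀ a b, DifferentiableAt ℝ (g a b) x) (hpar : ∀ a b c, covLow Γ g a b c x = 0)
    (hσsym : ∀ a b y, σ a b y = σ b a y) (hσ : ∀ a b, DifferentiableAt ℝ (σ a b) x) :
    (∃ v : Fin 2 → ℝ, ∀ a b c, covUp Γ σ a b c x = deltaTensor v a b c) ↔
      ∀ a b c, symmetrizedSum (fun a b c => covLow Γ (loweredField g σ) a b c x) a b c = 0 := by
  set e : Matrix (Fin 2) (Fin 2) ℝ := of fun i j => g i j x with e_def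
  set T : Fin 2 → Matrix (Fin 2) (Fin 2) ℝ := fun a => of fun b c => covUp Γ σ a b c x with T_def
  have he : IsUnit e := by
    have hdiag : g 0 0 x = 0 := self_eq_neg.mp (hskew 0 0)
    simp [isUnit_iff_isUnit_det, det_fin_two, e_def, hdiag, hskew 1 0, hg0]
  have hT (a : Fin 2) : (T a).IsSymm := IsSymm.ext fun b c => covUp_comm hσsym a c b
  have lowered_T (a b c : Fin 2) :
      covLow Γ (loweredField g σ) a b c x = (eᵀ * T a * e) b c := by
    rw [covLow_loweredField hg hσ hpar, transpose_mul_mul_apply]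
    rfl
  have e_skew (i j : Fin 2) : e i j = -e j i := hskew i j
  simpa only [lowered_T, ← Matrix.ext_iff, T_def, of_apply] using
    exists_eq_deltaTensor_iff_symmetrizedSum_eq_zero two_ne_zero three_ne_zero e_skew he hT

theorem metrisability_iff_killing_tensor_special_general
    (U : Set (Fin 2 → ℝ)) (Γ : Fin 2 → Fin 2 → Fin 2 → (Fin 2 → ℝ) → ℝ)
    (ε : Fin 2 → Fin 2 → (Fin 2 → ℝ) → ℝ)
    (hskew : ∀ a b x, ε a b x = -ε b a x)
    (hε0 : ∀ x ∈ U, ε 0 1 x ≠ 0)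
    (hε : ∀ a b, ∀ x ∈ U, DifferentiableAt ℝ (ε a b) x)
    (hpar : ∀ a b c, ∀ x ∈ U, covLow Γ ε a b c x = 0)
    (σ : Fin 2 → Fin 2 → (Fin 2 → ℝ) → ℝ)
    (hσsym : ∀ a b x, σ a b x = σ b a x)
    (hσ : ∀ a b, ∀ x ∈ U, DifferentiableAt ℝ (σ a b) x) :
    (∃ μ : Fin 2 → (Fin 2 → ℝ) → ℝ, ∀ a b c, ∀ x ∈ U,
        covUp Γ σ a b c x = deltaTensor (fun i => μ i x) a b c) ↔
      ∀ a b c, ∀ x ∈ U,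
        symmetrizedSum (fun a b c => covLow Γ (loweredField ε σ) a b c x) a b c = 0 := by
  have pointwise (x : Fin 2 → ℝ) (hx : x ∈ U) :=
    exists_covUp_eq_iff_symmetrizedSum_covLow_eq_zero (fun a b => hskew a b x) (hε0 x hx)
      (fun a b => hε a b x hx) (fun a b c => hpar a b c x hx) hσsym (fun a b => hσ a b x hx)
  constructor
  · rintro ⟨μ, hμ⟩ a b c x hx
    exact (pointwise x hx).mp ⟨fun i => μ i x, fun a b c => hμ a b c x hx⟩ a b c
  · intro hKilling
    choose! v hv using fun x hx => (pointwise x hx).mpr fun a b c => hKilling a b c x hx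
    exact ⟨fun i x => v x i, fun a b c x hx => hv x hx a b c⟩

end CovariantDerivative

/-- For a special connection (with parallel volume form `ε`), the metrisability
equations `∇_a σ^{bc} = δ^b_a μ^c + δ^c_a μ^b` hold for some `μ` iff the lowered
tensor `σ_{ab} = ε_{ca} ε_{db} σ^{cd}` satisfies the Killing-tensor equation
`∇_{(a}σ_{bc)} = 0`. -/
theorem metrisability_iff_killing_tensor_special
    (U : Set (Fin 2 → ℝ)) (hU : IsOpen U)
    (Γ : Fin 2 → Fin 2 → Fin 2 → (Fin 2 → ℝ) → ℝ)
    (hΓsym : ∀ a b c x, Γ a b c x = Γ a c b x)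
    (hΓC1 : ∀ a b c, ContDiffOn ℝ 1 (Γ a b c) U)
    (ε : Fin 2 → Fin 2 → (Fin 2 → ℝ) → ℝ)
    (hskew : ∀ a b x, ε a b x = -ε b a x)
    (hε0 : ∀ x ∈ U, ε 0 1 x ≠ 0)
    (hεC1 : ∀ a b, ContDiffOn ℝ 1 (ε a b) U)
    (hpar : ∀ a b c : Fin 2, ∀ x ∈ U,
      pdv a (ε b c) x - ∑ d, Γ d a b x * ε d c x - ∑ d, Γ d a c x * ε b d x = 0)
    (σ : Fin 2 → Fin 2 → (Fin 2 → ℝ) → ℝ)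
    (hσsym : ∀ a b x, σ a b x = σ b a x)
    (hσC1 : ∀ a b, ContDiffOn ℝ 1 (σ a b) U) :
    (∃ μ : Fin 2 → (Fin 2 → ℝ) → ℝ, ∀ a b c : Fin 2, ∀ x ∈ U,
        covUp Γ σ a b c x
          = (if b = a then μ c x else 0) + (if c = a then μ b x else 0))
    ↔ (∀ a b c : Fin 2, ∀ x ∈ U,
        covLow Γ (fun a b y => ∑ c, ∑ d, ε c a y * ε d b y * σ c d y) a b c x
          + covLow Γ (fun a b y => ∑ c, ∑ d, ε c a y * ε d b y * σ c d y) b c a x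
          + covLow Γ (fun a b y => ∑ c, ∑ d, ε c a y * ε d b y * σ c d y) c a b x
          + covLow Γ (fun a b y => ∑ c, ∑ d, ε c a y * ε d b y * σ c d y) a c b x
          + covLow Γ (fun a b y => ∑ c, ∑ d, ε c a y * ε d b y * σ c d y) b a c x
          + covLow Γ (fun a b y => ∑ c, ∑ d, ε c a y * ε d b y * σ c d y) c b a x
          = 0) := by
  exact metrisability_iff_killing_tensor_special_general U Γ ε hskew hε0
    (fun a b _ hx => ((hεC1 a b).differentiableOn one_ne_zero).differentiableAt (hU.mem_nhds hx))
    hpar σ hσsym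
    (fun a b _ hx => ((hσC1 a b).differentiableOn one_ne_zero).differentiableAt (hU.mem_nhds hx))
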